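/- (Full source power is optimal for the ideal low-pass relay) Let a > 0, b > 0, σ² > 0, P_s > 0, P_r > 0, δ ≥ 0 and 0 < ω_c < π. Suppose S : [0, π] → ℝ is integrable with S(ω) ≥ 0, satisfies the source power constraint (1/π) ∫_0^π S(ω) dω < P_s (strictly) and the relay power constraint (1/π) ∫_0^{ω_c} δ²·(a²·S(ω) + σ²) dω ≤ P_r. Then there exists an integrable S' : [0, π] → ℝ with S'(ω) ≥ 0 that satisfies both power constraints (with (1/π) ∫_0^π S'(ω) dω ≤ P_s) and yields a strictly larger objective value (1/π) ∫_0^{ω_c} (1/2)·log₂(1 + ((1 + a·b·δ)²/((b²δ² + 1)σ²))·S'(ω)) dω + (1/π) ∫_{ω_c}^{π} (1/2)·log₂(1 + S'(ω)/σ²) dω than the same expression evaluated at S. -/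

import Mathlib

open Real MeasureTheory Set intervalIntegral

/-!
The relay and the passband only see the input spectrum on `[0, ωc]`. Unused source power can
therefore be spread uniformly over the stopband `(ωc, π]`: this changes neither the relay power nor
the passband rate, and it strictly increases the stopband rate since `log` is strictly increasing.
-/

/-- The capacity, in bits per channel use, of the real additive white Gaussian noise channel with
signal-to-noise ratio `snr`. It is the integrand of both rate terms of the relay channel. -/
noncomputable def awgnCapacity (snr : ℝ) : ℝ :=
  (1 / 2) * logb 2 (1 + snr)

lemma strictMonoOn_awgnCapacity : StrictMonoOn awgnCapacity (Ioi (-1)) := by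
  intro x hx y _ hxy
  have hx_pos : 0 < 1 + x := by linarith [mem_Ioi.1 hx]
  exact mul_lt_mul_of_pos_left (logb_lt_logb one_lt_two hx_pos (by gcongr)) one_half_pos

lemma measurable_awgnCapacity : Measurable awgnCapacity := by
  unfold awgnCapacity logb
  fun_prop

lemma awgnCapacity_nonneg {x : ℝ} (hx : 0 ≤ x) : 0 ≤ awgnCapacity x :=
  mul_nonneg one_half_pos.le (logb_nonneg one_lt_two (by linarith))

lemma awgnCapacity_le_mul {x : ℝ} (hx : -1 < x) : awgnCapacity x ≤ 1 / (2 * log 2) * x := by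
  have hlog : log (1 + x) ≤ x := by linarith [log_le_sub_one_of_pos (show 0 < 1 + x by linarith)]
  calc
    awgnCapacity x = 1 / (2 * log 2) * log (1 + x) := by unfold awgnCapacity logb; ring
    _ ≤ 1 / (2 * log 2) * x := by gcongr

lemma integrable_awgnCapacity_comp {α : Type*} [MeasurableSpace α] {μ : Measure α} {f : α → ℝ}
    (hf : Integrable f μ) (hf_nonneg : 0 ≤ᵐ[μ] f) :
    Integrable (fun x ↦ awgnCapacity (f x)) μ := by
  refine (hf.const_mul (1 / (2 * log 2))).mono'
    (measurable_awgnCapacity.comp_aemeasurable hf.aemeasurable).aestronglyMeasurable ?_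
  filter_upwards [hf_nonneg] with x hx
  rw [norm_of_nonneg (awgnCapacity_nonneg hx)]
  exact awgnCapacity_le_mul (neg_one_lt_zero.trans_le hx)

lemma intervalIntegral_lt_of_lt_on_Ioo {f g : ℝ → ℝ} {u v : ℝ} (huv : u < v)
    (hf : IntervalIntegrable f volume u v) (hg : IntervalIntegrable g volume u v)
    (hlt : ∀ x ∈ Ioo u v, f x < g x) : ∫ x in u..v, f x < ∫ x in u..v, g x := by
  rw [← sub_pos, ← integral_sub hg hf]
  exact intervalIntegral_pos_of_pos_on (hg.sub hf) (fun x hx ↦ sub_pos.2 (hlt x hx)) huv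

lemma intervalIntegral_awgnCapacity_lt {f g : ℝ → ℝ} {u v : ℝ} (huv : u < v)
    (hf : IntervalIntegrable f volume u v) (hg : IntervalIntegrable g volume u v)
    (hf_nonneg : ∀ x ∈ Ioo u v, 0 ≤ f x) (hlt : ∀ x ∈ Ioo u v, f x < g x) :
    ∫ x in u..v, awgnCapacity (f x) < ∫ x in u..v, awgnCapacity (g x) := by
  have intervalIntegrable_capacity {h : ℝ → ℝ} (hh : IntervalIntegrable h volume u v)
      (hh_nonneg : ∀ x ∈ Ioo u v, 0 ≤ h x) :
      IntervalIntegrable (fun x ↦ awgnCapacity (h x)) volume u v := by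
    rw [intervalIntegrable_iff_integrableOn_Ioo_of_le huv.le] at hh ⊢
    exact integrable_awgnCapacity_comp hh (ae_restrict_of_forall_mem measurableSet_Ioo hh_nonneg)
  have hg_nonneg : ∀ x ∈ Ioo u v, 0 ≤ g x := fun x hx ↦ (hf_nonneg x hx).trans (hlt x hx).le
  refine intervalIntegral_lt_of_lt_on_Ioo huv (intervalIntegrable_capacity hf hf_nonneg)
    (intervalIntegrable_capacity hg hg_nonneg) fun x hx ↦ ?_
  exact strictMonoOn_awgnCapacity (neg_one_lt_zero.trans_le (hf_nonneg x hx))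
    (neg_one_lt_zero.trans_le (hg_nonneg x hx)) (hlt x hx)

lemma intervalIntegral_indicator_Ioi_const {u w v : ℝ} (huw : u ≤ w) (hwv : w ≤ v) (d : ℝ) :
    ∫ x in u..v, (Ioi w).indicator (fun _ ↦ d) x = (v - w) * d := by
  rw [integral_of_le (huw.trans hwv), setIntegral_indicator measurableSet_Ioi, Ioc_inter_Ioi,
    max_eq_right huw, ← integral_of_le hwv, intervalIntegral.integral_const, smul_eq_mul]

lemma exists_intervalIntegral_eq_of_lt {f : ℝ → ℝ} {u w v P : ℝ} (huw : u ≤ w) (hwv : w < v)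
    (hf : IntervalIntegrable f volume u v) (hP : ∫ x in u..v, f x < P) :
    ∃ g : ℝ → ℝ, IntervalIntegrable g volume u v ∧ EqOn g f (Iic w) ∧ (∀ x ∈ Ioi w, f x < g x) ∧
      ∫ x in u..v, g x = P := by
  set d : ℝ := (P - ∫ x in u..v, f x) / (v - w) with hd
  have hd_pos : 0 < d := div_pos (sub_pos.2 hP) (sub_pos.2 hwv)
  have h_bump : IntervalIntegrable ((Ioi w).indicator fun _ ↦ d) volume u v := by
    rw [intervalIntegrable_iff]
    exact (intervalIntegrable_iff.1 intervalIntegrable_const).indicator measurableSet_Ioi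
  refine ⟨f + (Ioi w).indicator fun _ ↦ d, hf.add h_bump, fun x hx ↦ ?_, fun x hx ↦ ?_, ?_⟩
  · simp [mem_Iic.1 hx]
  · simpa [mem_Ioi.1 hx] using hd_pos
  · calc
      ∫ x in u..v, (f + (Ioi w).indicator fun _ ↦ d) x
        = (∫ x in u..v, f x) + (v - w) * d := by
          simp only [Pi.add_apply]
          rw [integral_add hf h_bump, intervalIntegral_indicator_Ioi_const huw hwv.le]
      _ = P := by rw [hd, mul_div_cancel₀ _ (sub_pos.2 hwv).ne', add_sub_cancel]

lemma exists_intervalIntegral_eq_and_awgnCapacity_lt {f : ℝ → ℝ} {u w v N P : ℝ} (huw : u ≤ w)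
    (hwv : w < v) (hN : 0 < N) (hf : IntervalIntegrable f volume u v)
    (hf_nonneg : ∀ x ∈ Ioo w v, 0 ≤ f x) (hP : ∫ x in u..v, f x < P) :
    ∃ g : ℝ → ℝ, IntervalIntegrable g volume u v ∧ f ≤ g ∧ EqOn g f (Iic w) ∧
      ∫ x in u..v, g x = P ∧
      ∫ x in w..v, awgnCapacity (f x / N) < ∫ x in w..v, awgnCapacity (g x / N) := by
  obtain ⟨g, hg, h_eq, h_lt, h_integral⟩ := exists_intervalIntegral_eq_of_lt huw hwv hf hP
  have h_le (x : ℝ) : f x ≤ g x :=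
    (le_or_gt x w).elim (fun hx ↦ (h_eq hx).ge) (fun hx ↦ (h_lt x hx).le)
  have h_subset : uIcc w v ⊆ uIcc u v := uIcc_subset_uIcc_right (mem_uIcc_of_le huw hwv.le)
  refine ⟨g, hg, h_le, h_eq, h_integral, ?_⟩
  exact intervalIntegral_awgnCapacity_lt hwv
    ((hf.mono_set h_subset).div_const N) ((hg.mono_set h_subset).div_const N)
    (fun x hx ↦ div_nonneg (hf_nonneg x hx) hN.le)
    (fun x hx ↦ div_lt_div_of_pos_right (h_lt x hx.1) hN)

/-- Full source power is optimal for the ideal low-pass relay: if the source power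
constraint is strictly slack, then the input PSD can be modified to satisfy both power
constraints and yield a strictly larger objective value. -/
theorem full_source_power_optimal
    (a b σ2 Ps Pr δ ωc : ℝ) (ha : 0 < a) (hb : 0 < b) (hσ2 : 0 < σ2)
    (hPs : 0 < Ps) (hPr : 0 < Pr) (hδ : 0 ≤ δ) (hωc0 : 0 < ωc) (hωcπ : ωc < π)
    (S : ℝ → ℝ) (hS : IntegrableOn S (Icc 0 π)) (hSnn : ∀ ω, 0 ≤ S ω)
    (hsrc : (1 / π) * (∫ ω in (0:ℝ)..π, S ω) < Ps)
    (hrel : (1 / π) * (∫ ω in (0:ℝ)..ωc, δ ^ 2 * (a ^ 2 * S ω + σ2)) ≤ Pr) :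
    ∃ S' : ℝ → ℝ, IntegrableOn S' (Icc 0 π) ∧ (∀ ω, 0 ≤ S' ω) ∧
      (1 / π) * (∫ ω in (0:ℝ)..π, S' ω) ≤ Ps ∧
      (1 / π) * (∫ ω in (0:ℝ)..ωc, δ ^ 2 * (a ^ 2 * S' ω + σ2)) ≤ Pr ∧
      (1 / π) * (∫ ω in (0:ℝ)..ωc,
            (1 / 2) * Real.logb 2 (1 + ((1 + a * b * δ) ^ 2 / ((b ^ 2 * δ ^ 2 + 1) * σ2)) * S ω))
        + (1 / π) * (∫ ω in ωc..π, (1 / 2) * Real.logb 2 (1 + S ω / σ2))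
      < (1 / π) * (∫ ω in (0:ℝ)..ωc,
            (1 / 2) * Real.logb 2 (1 + ((1 + a * b * δ) ^ 2 / ((b ^ 2 * δ ^ 2 + 1) * σ2)) * S' ω))
        + (1 / π) * (∫ ω in ωc..π, (1 / 2) * Real.logb 2 (1 + S' ω / σ2)) := by
  have hS_int : IntervalIntegrable S volume 0 π :=
    (intervalIntegrable_iff_integrableOn_Icc_of_le pi_nonneg).2 hS
  have h_slack : ∫ ω in (0 : ℝ)..π, S ω < π * Ps := by
    rwa [one_div, inv_mul_lt_iff₀ pi_pos] at hsrc
  obtain ⟨S', hS'_int, h_le, h_passband, h_power, h_stopband_rate⟩ :=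
    exists_intervalIntegral_eq_and_awgnCapacity_lt hωc0.le hωcπ hσ2 hS_int (fun ω _ ↦ hSnn ω)
      h_slack
  have h_passband_integral (F : ℝ → ℝ) :
      ∫ ω in (0 : ℝ)..ωc, F (S' ω) = ∫ ω in (0 : ℝ)..ωc, F (S ω) :=
    integral_congr_Ioo_of_le hωc0.le fun ω hω ↦ congrArg F (h_passband hω.2.le)
  refine ⟨S', (intervalIntegrable_iff_integrableOn_Icc_of_le pi_nonneg).1 hS'_int,
    fun ω ↦ (hSnn ω).trans (h_le ω), ?_, ?_, ?_⟩
  · rw [h_power, one_div, inv_mul_cancel_left₀ pi_ne_zero]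
  · rwa [h_passband_integral fun s ↦ δ ^ 2 * (a ^ 2 * s + σ2)]
  · rw [h_passband_integral fun s ↦
      (1 / 2) * logb 2 (1 + ((1 + a * b * δ) ^ 2 / ((b ^ 2 * δ ^ 2 + 1) * σ2)) * s)]
    exact add_lt_add_right (mul_lt_mul_of_pos_left h_stopband_rate (one_div_pos.2 pi_pos)) _
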